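/- arXiv:2204.00339 — 4 statements merged into one kernel-verified Lean document; each statement's English description precedes it below -/
import Mathlib

section
/- Let A ∈ ℝ^{n×n}, B ∈ ℝ^{n×m}, let Q ∈ ℝ^{n×n} and R ∈ ℝ^{m×m} be symmetric positive definite, and for i ≥ 1 define Q_i := ∑_{j=0}^{i−1} A_jᵀ Q A_j, S_i := ∑_{j=1}^{i−1} A_jᵀ Q B_j, R_i := i·R + ∑_{j=1}^{i−1} B_jᵀ Q B_j, where A_j := A^j and B_j := ∑_{l=0}^{j−1} A^l B. Then the block matrix [[Q_i, S_i], [S_iᵀ, R_i]] ∈ ℝ^{(n+m)×(n+m)} is symmetric positive definite (in particular invertible). -/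
open Matrix

/-- `B_j := ∑_{l=0}^{j−1} A^l B` (so `B_0 = 0`). -/
noncomputable def Bmat {n m : ℕ} (A : Matrix (Fin n) (Fin n) ℝ)
    (B : Matrix (Fin n) (Fin m) ℝ) (j : ℕ) : Matrix (Fin n) (Fin m) ℝ :=
  ∑ l ∈ Finset.range j, A ^ l * B

/-- `Q_i := ∑_{j=0}^{i−1} A_jᵀ Q A_j`. -/
noncomputable def Qmat {n : ℕ} (A Q : Matrix (Fin n) (Fin n) ℝ) (i : ℕ) :
    Matrix (Fin n) (Fin n) ℝ :=
  ∑ j ∈ Finset.range i, (A ^ j)ᵀ * Q * A ^ j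

/-- `S_i := ∑_{j=1}^{i−1} A_jᵀ Q B_j`. -/
noncomputable def Smat {n m : ℕ} (A : Matrix (Fin n) (Fin n) ℝ)
    (B : Matrix (Fin n) (Fin m) ℝ) (Q : Matrix (Fin n) (Fin n) ℝ) (i : ℕ) :
    Matrix (Fin n) (Fin m) ℝ :=
  ∑ j ∈ Finset.Ico 1 i, (A ^ j)ᵀ * Q * Bmat A B j

/-- `R_i := i·R + ∑_{j=1}^{i−1} B_jᵀ Q B_j`. -/
noncomputable def Rmat {n m : ℕ} (A : Matrix (Fin n) (Fin n) ℝ)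
    (B : Matrix (Fin n) (Fin m) ℝ) (Q : Matrix (Fin n) (Fin n) ℝ)
    (R : Matrix (Fin m) (Fin m) ℝ) (i : ℕ) : Matrix (Fin m) (Fin m) ℝ :=
  i • R + ∑ j ∈ Finset.Ico 1 i, (Bmat A B j)ᵀ * Q * Bmat A B j

/-!
The pair `(x, u)` of state and held input evolves by the block matrix `M = [[A, B], [0, 1]]`, whose
`j`-th power is `[[A_j, B_j], [0, 1]]`. Hence the cost cumulated over `i` steps is the quadratic
form of `∑_{j < i} (M ^ j)ᵀ * diag(Q, R) * M ^ j`. The term `j = 0` is `diag(Q, R) ≻ 0`, and all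
the others are positive semidefinite (not definite when `A` is singular).
-/

section PosDef

variable {ι n m R : Type*} [Ring R] [PartialOrder R] [StarRing R] [AddLeftMono R]

theorem posDef_sum_of_exists {s : Finset ι} {P : ι → Matrix n n R}
    (hs : ∀ j ∈ s, (P j).PosSemidef) (hpos : ∃ j ∈ s, (P j).PosDef) :
    (∑ j ∈ s, P j).PosDef := by
  classical
  obtain ⟨k, hk, hPk⟩ := hpos
  rw [← Finset.add_sum_erase s P hk]
  exact hPk.add_posSemidef (posSemidef_sum _ fun j hj ↦ hs j (Finset.mem_of_mem_erase hj))

theorem posDef_sum_conjTranspose_pow_mul_mul_pow [Fintype n] [DecidableEq n] {P : Matrix n n R}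
    (hP : P.PosDef) (M : Matrix n n R) {i : ℕ} (hi : 0 < i) :
    (∑ j ∈ Finset.range i, (M ^ j)ᴴ * P * M ^ j).PosDef :=
  posDef_sum_of_exists (fun j _ ↦ hP.posSemidef.conjTranspose_mul_mul_same (M ^ j))
    ⟨0, Finset.mem_range.mpr hi, by simpa using hP⟩

theorem posDef_fromBlocks_zero_zero {P : Matrix n n R} {N : Matrix m m R}
    (hP : P.PosDef) (hN : N.PosDef) : (fromBlocks P 0 0 N).PosDef := by
  refine ⟨hP.isHermitian.fromBlocks conjTranspose_zero hN.isHermitian, fun z hz ↦ ?_⟩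
  obtain ⟨x, u, rfl⟩ : ∃ x u, z = Finsupp.sumElim x u :=
    ⟨_, _, (Finsupp.comapDomain_sumElim_comapDomain z).symm⟩
  suffices 0 < (x.sum fun a xa ↦ x.sum fun b xb ↦ star xa * P a b * xb) +
      u.sum fun a ua ↦ u.sum fun b ub ↦ star ua * N a b * ub by
    simpa [Finsupp.sum_sumElim, Function.comp_def] using this
  by_cases hx : x = 0
  · have hu : u ≠ 0 := by
      rintro rfl
      exact hz (by simp [hx])
    exact add_pos_of_nonneg_of_pos (hP.posSemidef.2 x) (hN.2 hu)
  · exact add_pos_of_pos_of_nonneg (hP.2 hx) (hN.posSemidef.2 u)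

end PosDef

theorem sum_fromBlocks {ι n m l o α : Type*} [AddCommMonoid α] (s : Finset ι)
    (P : ι → Matrix n l α) (S : ι → Matrix n m α) (T : ι → Matrix o l α) (N : ι → Matrix o m α) :
    ∑ j ∈ s, fromBlocks (P j) (S j) (T j) (N j) =
      fromBlocks (∑ j ∈ s, P j) (∑ j ∈ s, S j) (∑ j ∈ s, T j) (∑ j ∈ s, N j) := by
  ext (a | a) (b | b) <;> simp [Matrix.sum_apply]

theorem conjTranspose_fromBlocks_zero_one_mul_mul {n m l α : Type*} [Fintype n] [Fintype m]
    [DecidableEq m] [Semiring α] [StarRing α] (F : Matrix n l α) (G : Matrix n m α)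
    (Q : Matrix n n α) (R : Matrix m m α) :
    (fromBlocks F G (0 : Matrix m l α) (1 : Matrix m m α))ᴴ * fromBlocks Q 0 0 R *
        fromBlocks F G (0 : Matrix m l α) (1 : Matrix m m α) =
      fromBlocks (Fᴴ * Q * F) (Fᴴ * Q * G) (Gᴴ * Q * F) (R + Gᴴ * Q * G) := by
  simp [fromBlocks_conjTranspose, fromBlocks_multiply, add_comm]

section HeldInput

variable {n m α : Type*} [DecidableEq m] [Semiring α]

/-- The one-step transition matrix `[[A, B], [0, 1]]` of the state-input pair `(x, u)` under
`x ↦ A x + B u` with `u` held constant; the pair is indexed by `n ⊕ m`, state first. -/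
def heldInputTransition (A : Matrix n n α) (B : Matrix n m α) : Matrix (n ⊕ m) (n ⊕ m) α :=
  fromBlocks A B 0 1

theorem heldInputTransition_pow [Fintype n] [Fintype m] [DecidableEq n]
    (A : Matrix n n α) (B : Matrix n m α) (j : ℕ) :
    heldInputTransition A B ^ j =
      fromBlocks (A ^ j) (∑ l ∈ Finset.range j, A ^ l * B) 0 1 := by
  induction j with
  | zero => simp
  | succ j ih =>
    rw [pow_succ, ih, heldInputTransition, fromBlocks_multiply]
    simp [pow_succ, Finset.sum_range_succ, add_comm]

end HeldInput

theorem sum_Ico_one_eq_sum_range {M : Type*} [AddCommMonoid M] {f : ℕ → M} (h0 : f 0 = 0)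
    (i : ℕ) : ∑ j ∈ Finset.Ico 1 i, f j = ∑ j ∈ Finset.range i, f j := by
  rcases i.eq_zero_or_pos with rfl | hi
  · simp
  · rw [Finset.sum_range_eq_add_Ico f hi, h0, zero_add]

section CumulatedCost

variable {n m : ℕ} (A : Matrix (Fin n) (Fin n) ℝ) (B : Matrix (Fin n) (Fin m) ℝ)
  (Q : Matrix (Fin n) (Fin n) ℝ) (R : Matrix (Fin m) (Fin m) ℝ)

theorem Bmat_zero : Bmat A B 0 = 0 :=
  Finset.sum_range_zero _

theorem Smat_eq_sum_range (i : ℕ) :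
    Smat A B Q i = ∑ j ∈ Finset.range i, (A ^ j)ᵀ * Q * Bmat A B j :=
  sum_Ico_one_eq_sum_range (by simp [Bmat_zero]) i

theorem Rmat_eq_sum_range (i : ℕ) :
    Rmat A B Q R i = ∑ j ∈ Finset.range i, (R + (Bmat A B j)ᵀ * Q * Bmat A B j) := by
  rw [Rmat, sum_Ico_one_eq_sum_range (by simp [Bmat_zero]), Finset.sum_add_distrib,
    Finset.sum_const, Finset.card_range]

variable {Q}

theorem transpose_Smat_eq_sum_range (hQ : Q.IsSymm) (i : ℕ) :
    (Smat A B Q i)ᵀ = ∑ j ∈ Finset.range i, (Bmat A B j)ᵀ * Q * A ^ j := by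
  simp [Smat_eq_sum_range, transpose_sum, hQ.eq, Matrix.mul_assoc]

theorem fromBlocks_cumulatedCost_eq_sum (hQ : Q.IsSymm) (i : ℕ) :
    fromBlocks (Qmat A Q i) (Smat A B Q i) (Smat A B Q i)ᵀ (Rmat A B Q R i) =
      ∑ j ∈ Finset.range i, (heldInputTransition A B ^ j)ᴴ * fromBlocks Q 0 0 R *
        heldInputTransition A B ^ j := by
  simp only [heldInputTransition_pow, conjTranspose_fromBlocks_zero_one_mul_mul, sum_fromBlocks]
  rw [transpose_Smat_eq_sum_range A B hQ, Smat_eq_sum_range, Rmat_eq_sum_range]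
  simp only [Qmat, Bmat, conjTranspose_eq_transpose_of_trivial]

end CumulatedCost

/-- **Positive definiteness of the cumulated cost matrix.**
If `Q ≻ 0` and `R ≻ 0`, then for `i ≥ 1` the block matrix `[[Q_i, S_i], [S_iᵀ, R_i]]`
is symmetric positive definite (in particular invertible). -/
theorem cumulated_cost_block_posDef {n m : ℕ}
    (A : Matrix (Fin n) (Fin n) ℝ) (B : Matrix (Fin n) (Fin m) ℝ)
    (Q : Matrix (Fin n) (Fin n) ℝ) (R : Matrix (Fin m) (Fin m) ℝ)
    (hQ : Q.PosDef) (hR : R.PosDef) (i : ℕ) (hi : 1 ≤ i) :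
    (Matrix.fromBlocks (Qmat A Q i) (Smat A B Q i) (Smat A B Q i)ᵀ (Rmat A B Q R i)).PosDef := by
  have Q_symm : Q.IsSymm := by simpa only [isHermitian_iff_isSymm] using hQ.isHermitian
  rw [fromBlocks_cumulatedCost_eq_sum A B R Q_symm]
  exact posDef_sum_conjTranspose_pow_mul_mul_pow (posDef_fromBlocks_zero_zero hQ hR)
    (heldInputTransition A B) hi
end

section
/- Let 𝒜 ∈ ℝ^{n×n}, ℬ ∈ ℝ^{n×m}, let N ∈ ℝ^{(n+m)×(n+m)} be a symmetric positive definite block matrix N = [[Q̂, Ŝ], [Ŝᵀ, R̂]] with inverse N⁻¹ = [[Q̃, S̃], [S̃ᵀ, R̃]] (Q̃ ∈ ℝ^{n×n}, S̃ ∈ ℝ^{n×m}, R̃ ∈ ℝ^{m×m}), let X ∈ ℝ^{n×n} be symmetric positive definite and Y ∈ ℝ^{m×n}. Suppose the symmetric 4×4 block matrix [[X, 0, 0, 𝒜X + ℬY], [0, Q̃, S̃, X], [0, S̃ᵀ, R̃, Y], [(𝒜X + ℬY)ᵀ, X, Yᵀ, X]] is positive semidefinite. Then, with P := X⁻¹ and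 K := Y X⁻¹, it holds that (𝒜 + ℬK)ᵀ P (𝒜 + ℬK) − P + Q̂ + Ŝ K + Kᵀ Ŝᵀ + Kᵀ R̂ K ⪯ 0. -/
open Matrix

/-!
Put `F = 𝒜 + ℬK` and `G = [1; K]`. As `Y = KX`, the last block column of the LMI is `[F; G] * X`
on top of `X`, and the first three diagonal blocks are `diag(X, N⁻¹)`. Their Schur complement is
`X - ([F; G] * X)ᴴ * diag(X⁻¹, N) * ([F; G] * X)`, which is the congruence by `X` of
`X⁻¹ - Fᴴ * X⁻¹ * F - Gᴴ * N * G`, and `Gᴴ * N * G` is the stage cost `Q̂ + ŜK + KᴴŜᴴ + KᴴR̂K`.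
-/

section BlockMatrices

variable {α k l m n p : Type*}

theorem posDef_fromBlocks_zero [Ring α] [PartialOrder α] [StarRing α] [AddLeftMono α]
    [Finite k] [Finite l] {A : Matrix k k α} {D : Matrix l l α} (hA : A.PosDef) (hD : D.PosDef) :
    (fromBlocks A 0 0 D).PosDef := by
  have := Fintype.ofFinite k
  have := Fintype.ofFinite l
  refine .of_dotProduct_mulVec_pos
    (hA.isHermitian.fromBlocks conjTranspose_zero hD.isHermitian) fun x hx ↦ ?_
  obtain ⟨u, v, rfl⟩ : ∃ u v, x = Sum.elim u v := ⟨_, _, (Sum.elim_comp_inl_inr x).symm⟩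
  have form_eq : star (Sum.elim u v) ⬝ᵥ (fromBlocks A 0 0 D *ᵥ Sum.elim u v) =
      star u ⬝ᵥ (A *ᵥ u) + star v ⬝ᵥ (D *ᵥ v) := by
    simp [Function.star_sumElim, fromBlocks_mulVec, sumElim_dotProduct_sumElim]
  rw [form_eq]
  by_cases hu : u = 0
  · have hv : v ≠ 0 := by
      rintro rfl
      exact hx (by simp [hu])
    simpa [hu] using hD.dotProduct_mulVec_pos hv
  · exact add_pos_of_pos_of_nonneg (hA.dotProduct_mulVec_pos hu)
      (hD.posSemidef.dotProduct_mulVec_nonneg v)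

theorem conjTranspose_fromRows_mul_fromBlocks_mul_fromRows [Semiring α] [Star α]
    [Fintype k] [Fintype l] (A : Matrix k k α) (B : Matrix k l α) (C : Matrix l k α)
    (D : Matrix l l α) (F : Matrix k n α) (G : Matrix l n α) :
    (fromRows F G)ᴴ * fromBlocks A B C D * fromRows F G =
      Fᴴ * A * F + Fᴴ * B * G + Gᴴ * C * F + Gᴴ * D * G := by
  rw [conjTranspose_fromRows_eq_fromCols_conjTranspose, fromCols_mul_fromBlocks,
    fromCols_mul_fromRows, Matrix.add_mul, Matrix.add_mul]
  abel

/-- Reassociates the index sum so that the first three of four blocks come together, with the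
second and third grouped among themselves. -/
def fourBlockEquiv (p n m k : Type*) : (p ⊕ (n ⊕ m)) ⊕ k ≃ (p ⊕ n) ⊕ (m ⊕ k) :=
  ((Equiv.sumAssoc p n m).symm.sumCongr (.refl k)).trans (Equiv.sumAssoc (p ⊕ n) m k)

theorem fromBlocks_submatrix_fourBlockEquiv [Zero α] [Star α] (Z : Matrix p p α) (Q : Matrix n n α)
    (S : Matrix n m α) (R : Matrix m m α) (U : Matrix p k α) (V : Matrix n k α)
    (Y : Matrix m k α) (X : Matrix k k α) :
    (fromBlocks (fromBlocks Z 0 0 Q) (fromBlocks 0 U S V) (fromBlocks 0 Sᴴ Uᴴ Vᴴ)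
        (fromBlocks R Y Yᴴ X)).submatrix (fourBlockEquiv p n m k) (fourBlockEquiv p n m k) =
      fromBlocks (fromBlocks Z 0 0 (fromBlocks Q S Sᴴ R)) (fromRows U (fromRows V Y))
        (fromRows U (fromRows V Y))ᴴ X := by
  ext ((i | i | i) | i) ((j | j | j) | j) <;> rfl

end BlockMatrices

section SchurComplement

variable {𝕜 k l m n p : Type*} [Field 𝕜] [PartialOrder 𝕜] [StarRing 𝕜] [StarOrderedRing 𝕜]
  [Fintype k] [DecidableEq k] [Fintype l] [DecidableEq l] [Fintype m] [DecidableEq m]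
  [Fintype n] [DecidableEq n] [Fintype p] [DecidableEq p]

theorem posSemidef_fromBlocks_mul_iff {D : Matrix k k 𝕜} {X : Matrix n n 𝕜} (hD : D.PosDef)
    (hX : X.PosDef) (L : Matrix k n 𝕜) :
    (fromBlocks D (L * X) (L * X)ᴴ X).PosSemidef ↔ (X⁻¹ - Lᴴ * D⁻¹ * L).PosSemidef := by
  have := hD.isUnit.invertible
  have := hX.isUnit.invertible
  have congruence : X - (L * X)ᴴ * D⁻¹ * (L * X) = star X * (X⁻¹ - Lᴴ * D⁻¹ * L) * X := by
    simp only [star_eq_conjTranspose, hX.isHermitian.eq, conjTranspose_mul, Matrix.mul_sub,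
      Matrix.sub_mul, Matrix.mul_assoc, inv_mul_of_invertible, Matrix.mul_one]
  rw [hD.fromBlocks₁₁, congruence, hX.isUnit.posSemidef_star_left_conjugate_iff]

theorem posSemidef_fromBlocks_fromRows_mul_iff {Z : Matrix k k 𝕜} {N : Matrix l l 𝕜}
    {X : Matrix n n 𝕜} (hZ : Z.PosDef) (hN : N.PosDef) (hX : X.PosDef) (F : Matrix k n 𝕜)
    (G : Matrix l n 𝕜) :
    (fromBlocks (fromBlocks Z 0 0 N⁻¹) (fromRows F G * X) (fromRows F G * X)ᴴ X).PosSemidef ↔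
      (X⁻¹ - (Fᴴ * Z⁻¹ * F + Gᴴ * N * G)).PosSemidef := by
  have := hN.isUnit.invertible
  have inv_diag : (fromBlocks Z 0 0 N⁻¹)⁻¹ = fromBlocks Z⁻¹ 0 0 N := by
    rw [inv_fromBlocks_zero₁₂_of_isUnit_iff _ _ _ (iff_of_true hZ.isUnit hN.inv.isUnit)]
    simp
  rw [posSemidef_fromBlocks_mul_iff (posDef_fromBlocks_zero hZ hN.inv) hX, inv_diag,
    conjTranspose_fromRows_mul_fromBlocks_mul_fromRows]
  simp

theorem lmi_implies_qmi_general (A : Matrix p n 𝕜) (B : Matrix p m 𝕜) (Qh : Matrix n n 𝕜)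
    (Sh : Matrix n m 𝕜) (Rh : Matrix m m 𝕜) (Qt : Matrix n n 𝕜) (St : Matrix n m 𝕜)
    (Rt : Matrix m m 𝕜) (hN : (fromBlocks Qh Sh Shᴴ Rh).PosDef)
    (hNinv : (fromBlocks Qh Sh Shᴴ Rh)⁻¹ = fromBlocks Qt St Stᴴ Rt) {Z : Matrix p p 𝕜}
    (hZ : Z.PosDef) {X : Matrix n n 𝕜} (hX : X.PosDef) (Y : Matrix m n 𝕜) :
    (fromBlocks (fromBlocks Z 0 0 Qt) (fromBlocks 0 (A * X + B * Y) St X)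
        (fromBlocks 0 Stᴴ (A * X + B * Y)ᴴ X) (fromBlocks Rt Y Yᴴ X)).PosSemidef ↔
      (-((A + B * (Y * X⁻¹))ᴴ * Z⁻¹ * (A + B * (Y * X⁻¹)) - X⁻¹ + Qh + Sh * (Y * X⁻¹) +
        (Y * X⁻¹)ᴴ * Shᴴ + (Y * X⁻¹)ᴴ * Rh * (Y * X⁻¹))).PosSemidef := by
  have := hX.isUnit.invertible
  have last_column : fromRows (A * X + B * Y) (fromRows X Y) =
      fromRows (A + B * (Y * X⁻¹)) (fromRows 1 (Y * X⁻¹)) * X := by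
    simp [fromRows_mul, Matrix.add_mul, Matrix.mul_assoc]
  have lmi_reindex := fromBlocks_submatrix_fourBlockEquiv Z Qt St Rt (A * X + B * Y) X Y X
  rw [hX.isHermitian.eq, last_column, ← hNinv] at lmi_reindex
  rw [← posSemidef_submatrix_equiv (fourBlockEquiv p n m n), lmi_reindex,
    posSemidef_fromBlocks_fromRows_mul_iff hZ hN hX,
    conjTranspose_fromRows_mul_fromBlocks_mul_fromRows]
  simp only [conjTranspose_one, Matrix.one_mul, Matrix.mul_one]
  congr! 1
  abel

end SchurComplement

/-- **Schur-complement step of Lemma 1.**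
Let `N = [[Q̂, Ŝ], [Ŝᵀ, R̂]] ≻ 0` with inverse `N⁻¹ = [[Q̃, S̃], [S̃ᵀ, R̃]]`, let `X ≻ 0` and
`Y` be such that the 4×4 block LMI
`[[X, 0, 0, 𝒜X + ℬY], [0, Q̃, S̃, X], [0, S̃ᵀ, R̃, Y], [(𝒜X + ℬY)ᵀ, X, Yᵀ, X]] ⪰ 0`
holds. Then, with `P := X⁻¹` and `K := Y X⁻¹`,
`(𝒜 + ℬK)ᵀ P (𝒜 + ℬK) − P + Q̂ + Ŝ K + Kᵀ Ŝᵀ + Kᵀ R̂ K ⪯ 0`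
(stated as: its negative is positive semidefinite). -/
theorem lmi_implies_qmi {n m : ℕ}
    (𝒜 : Matrix (Fin n) (Fin n) ℝ) (ℬ : Matrix (Fin n) (Fin m) ℝ)
    (Qh : Matrix (Fin n) (Fin n) ℝ) (Sh : Matrix (Fin n) (Fin m) ℝ)
    (Rh : Matrix (Fin m) (Fin m) ℝ)
    (Qt : Matrix (Fin n) (Fin n) ℝ) (St : Matrix (Fin n) (Fin m) ℝ)
    (Rt : Matrix (Fin m) (Fin m) ℝ)
    (hN : (Matrix.fromBlocks Qh Sh Shᵀ Rh).PosDef)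
    (hNinv : (Matrix.fromBlocks Qh Sh Shᵀ Rh)⁻¹ = Matrix.fromBlocks Qt St Stᵀ Rt)
    (X : Matrix (Fin n) (Fin n) ℝ) (hX : X.PosDef) (Y : Matrix (Fin m) (Fin n) ℝ)
    (hLMI : (Matrix.fromBlocks
        (Matrix.fromBlocks X 0 0 Qt)
        (Matrix.fromBlocks 0 (𝒜 * X + ℬ * Y) St X)
        (Matrix.fromBlocks 0 Stᵀ (𝒜 * X + ℬ * Y)ᵀ X)
        (Matrix.fromBlocks Rt Y Yᵀ X)).PosSemidef) :
    (-((𝒜 + ℬ * (Y * X⁻¹))ᵀ * X⁻¹ * (𝒜 + ℬ * (Y * X⁻¹)) - X⁻¹ +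
        Qh + Sh * (Y * X⁻¹) + (Y * X⁻¹)ᵀ * Shᵀ +
        (Y * X⁻¹)ᵀ * Rh * (Y * X⁻¹))).PosSemidef := by
  simp only [← conjTranspose_eq_transpose_of_trivial] at hN hNinv hLMI ⊢
  exact (lmi_implies_qmi_general 𝒜 ℬ Qh Sh Rh Qt St Rt hN hNinv hX hX Y).mp hLMI
end

section
/- Let A ∈ ℝ^{n×n}, B ∈ ℝ^{n×m}, K_f ∈ ℝ^{m×n}, let g, c, b ∈ ℕ with 1 ≤ g ≤ c ≤ b, M := ⌈c/g⌉, and let P ∈ ℕ. Let X ⊆ ℝ^n, U ⊆ ℝ^m and X_f ⊆ X satisfy K_f X_f ⊆ U and (A_{pM} + B_{pM} K_f) X_f ⊆ X_f for all p ∈ {1, …, P+1}, where A_j := A^j and B_j := ∑_{l=0}^{j−1} A^l B. Then for every p ∈ {1, …, P+1} and every (x, w, β) ∈ X_f × U × ℤ∩[c−g, b], the state after p sampling instants of length M under the terminal control law with loss pattern (1, 0, …, 0), namely ((A_{pM} + B_{pM} K_f)x, K_f x, β_p) with β_p the p-fold iterate of β ↦ min(β + Mg − c, b) applied to β, again lies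 in X_f × U × ℤ∩[c−g, b]. -/
open Matrix

/-- The level of a token bucket of capacity `b`, started at `β`, after one transmission of cost `c`
and a recharge by `r` tokens; `r = M * g` for a sampling interval of length `M` and token rate `g`.
Levels lie in a group rather than in `ℕ`, so that the subtraction does not truncate. -/
def bucketUpdate {α : Type*} [AddCommGroup α] [LinearOrder α] (r c b β : α) : α :=
  min (β + r - c) b

theorem mapsTo_bucketUpdate_Icc {α : Type*} [AddCommGroup α] [LinearOrder α]
    [IsOrderedAddMonoid α] {a r c b : α} (hab : a ≤ b) (hcr : c ≤ r) :
    Set.MapsTo (bucketUpdate r c b) (Set.Icc a b) (Set.Icc a b) := by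
  intro β hβ
  have level_le_recharged : β ≤ β + r - c := by
    rw [add_sub_assoc]
    exact le_add_of_nonneg_right (sub_nonneg.mpr hcr)
  exact ⟨le_min (hβ.1.trans level_le_recharged) hab, min_le_right _ _⟩

theorem le_natCeil_div_mul {K : Type*} [Semifield K] [LinearOrder K] [IsStrictOrderedRing K]
    [FloorSemiring K] (c : K) {g : K} (hg : 0 < g) : c ≤ ⌈c / g⌉₊ * g :=
  (div_le_iff₀ hg).mp (Nat.le_ceil (c / g))

/-- **Terminal-set invariance (claim (15) of Lemma 1).**
Under the terminal control law `v = K_f x` with sampling interval `M = ⌈c/g⌉` and loss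
pattern `(1, 0, …, 0)`, the terminal set `Ξ_f = X_f × U × (ℤ ∩ [c−g, b])` is invariant:
for `p ∈ {1, …, P+1}` and `(x, w, β) ∈ Ξ_f`, the successor overall state
`((A_{pM} + B_{pM}K_f)x, K_f x, β_p)`, where `β_p` is the `p`-fold iterate of
`β ↦ min (β + Mg − c) b`, again lies in `Ξ_f`. -/
theorem terminal_set_invariance {n m : ℕ}
    (A : Matrix (Fin n) (Fin n) ℝ) (B : Matrix (Fin n) (Fin m) ℝ)
    (Kf : Matrix (Fin m) (Fin n) ℝ)
    (g c b : ℕ) (hg : 1 ≤ g) (hgc : g ≤ c) (hcb : c ≤ b)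
    (M : ℕ) (hM : M = ⌈(c : ℚ) / (g : ℚ)⌉₊) (P : ℕ)
    (X : Set (Fin n → ℝ)) (U : Set (Fin m → ℝ)) (Xf : Set (Fin n → ℝ))
    (hXfX : Xf ⊆ X)
    (hKfU : ∀ x ∈ Xf, Kf *ᵥ x ∈ U)
    (hXfInv : ∀ p : ℕ, 1 ≤ p → p ≤ P + 1 → ∀ x ∈ Xf,
      (A ^ (p * M) + Bmat A B (p * M) * Kf) *ᵥ x ∈ Xf) :
    ∀ p : ℕ, 1 ≤ p → p ≤ P + 1 →
      ∀ x ∈ Xf, ∀ w ∈ U, ∀ β : ℤ, (c : ℤ) - (g : ℤ) ≤ β → β ≤ (b : ℤ) →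
        (A ^ (p * M) + Bmat A B (p * M) * Kf) *ᵥ x ∈ Xf ∧
        Kf *ᵥ x ∈ U ∧
        (c : ℤ) - (g : ℤ) ≤ (fun β' : ℤ => min (β' + (M * g : ℤ) - (c : ℤ)) (b : ℤ))^[p] β ∧
        (fun β' : ℤ => min (β' + (M * g : ℤ) - (c : ℤ)) (b : ℤ))^[p] β ≤ (b : ℤ) := by
  intro p hp hpP x hx w _ β hβ hβb
  have cost_le_recharge : (c : ℤ) ≤ M * g := by
    have h := le_natCeil_div_mul (c : ℚ) (Nat.cast_pos.mpr hg : (0 : ℚ) < g)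
    rw [← hM] at h
    exact_mod_cast h
  have floor_le_capacity : (c : ℤ) - g ≤ b := by lia
  exact ⟨hXfInv p hp hpP x hx, hKfU x hx,
    (mapsTo_bucketUpdate_Icc floor_le_capacity cost_le_recharge).iterate p ⟨hβ, hβb⟩⟩
end

section
/- Let P, L, N, r ∈ ℕ with L = N + P and N ≥ 1, let r⁺ ∈ {0, r+1}, and assume r ≤ P if r⁺ = 0, and r + 1 ≤ P if r⁺ = r + 1. Let σ' ∈ D^P_L(r⁺). Define σ : {0, …, L−1} → {0,1} by σ(0) := 1 if r⁺ = 0 and σ(0) := 0 if r⁺ = r+1, and σ(i+1) := σ'(i) for i ∈ {0, …, L−2}. Then σ ∈ D^P_L(r). (Hence for every admissible loss sequence at the next sampling instant there exists an admissible loss sequence at the current instant whose first entry matches the realized loss and whose remaining entries are the given sequence.) -/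
/-!
For `r ≤ P`, the conditions in `Admissible P L r σ` together say that some packet of index at
most `P - r` is delivered and that no `P + 1` consecutive packets of `{0, …, L - 1}` are all lost.
When an entry is prepended, every new window of `P + 1` packets is either an old window or the one
starting at `0`, and the latter contains the early delivery. So only the bound on the first
delivery has to be checked.
-/

/-- The admissible loss-sequence set `D^P_L(r)`: maps `σ : {0,…,L−1} → {0,1}` (encoded as
`σ : ℕ → Bool`, only indices `< L` being constrained) such that (i) some transmission in the
window succeeds; (ii) the first success occurs at an index `≤ P − r`; (iii) consecutive
successes are at most `P + 1` apart; (iv) the last success `i` satisfies `L − i ≤ P + 1`. -/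
def Admissible (P L r : ℕ) (σ : ℕ → Bool) : Prop :=
  (∃ i, i < L ∧ σ i = true) ∧
  (∀ i, i < L → σ i = true → (∀ l, l < i → σ l = false) → i ≤ P - r) ∧
  (∀ i i', i < i' → i' < L → σ i = true → σ i' = true →
    (∀ l, i < l → l < i' → σ l = false) → i' - i ≤ P + 1) ∧
  (∀ i, i < L → σ i = true → (∀ l, i < l → l < L → σ l = false) → L - i ≤ P + 1)

namespace Admissible

variable {P L r : ℕ} {σ : ℕ → Bool}

theorem exists_delivered_early (hσ : Admissible P L r σ) (hr : r ≤ P) :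
    ∃ i < L, i + r ≤ P ∧ σ i = true := by
  obtain ⟨⟨a, haL, ha⟩, hfirst, -, -⟩ := hσ
  have hex : ∃ i, σ i = true := ⟨a, ha⟩
  have hlt : Nat.find hex < L := (Nat.find_min' hex ha).trans_lt haL
  have hle : Nat.find hex ≤ P - r :=
    hfirst _ hlt (Nat.find_spec hex) fun l hl => Bool.eq_false_iff.mpr (Nat.find_min hex hl)
  exact ⟨Nat.find hex, hlt, by omega, Nat.find_spec hex⟩

theorem exists_delivered_of_delivered_lt (hσ : Admissible P L r σ) {i : ℕ} (hi : σ i = true)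
    (hiL : i + P + 1 < L) : ∃ j, i < j ∧ j ≤ i + P + 1 ∧ σ j = true := by
  obtain ⟨-, -, hgap, hlast⟩ := hσ
  have hex : ∃ j, i < j ∧ j < L ∧ σ j = true := by
    by_contra! hlost
    have := hlast i (by omega) hi fun l hil hlL => Bool.eq_false_iff.mpr (hlost l hil hlL)
    omega
  obtain ⟨hij, hjL, hj⟩ := Nat.find_spec hex
  have hlost : ∀ l, i < l → l < Nat.find hex → σ l = false := fun l hil hl =>
    Bool.eq_false_iff.mpr fun h => Nat.find_min hex hl ⟨hil, hl.trans hjL, h⟩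
  have := hgap i _ hij hjL hi hj hlost
  exact ⟨Nat.find hex, hij, by omega, hj⟩

theorem exists_delivered_mem_Icc (hσ : Admissible P L r σ) (hr : r ≤ P) {k : ℕ}
    (hk : k + P < L) : ∃ l ∈ Set.Icc k (k + P), σ l = true := by
  induction k with
  | zero =>
    obtain ⟨i, -, hiP, hi⟩ := hσ.exists_delivered_early hr
    exact ⟨i, ⟨by omega, by omega⟩, hi⟩
  | succ k ih =>
    obtain ⟨l, ⟨hkl, hlk⟩, hl⟩ := ih (by omega)
    rcases hkl.eq_or_lt with rfl | hkl
    · obtain ⟨j, hkj, hjk, hj⟩ := hσ.exists_delivered_of_delivered_lt hl (by omega)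
      exact ⟨j, ⟨hkj, by omega⟩, hj⟩
    · exact ⟨l, ⟨hkl, by omega⟩, hl⟩

theorem of_exists_delivered (hfirst : ∃ i < L, i + r ≤ P ∧ σ i = true)
    (hwindow : ∀ k, k + P < L → ∃ l ∈ Set.Icc k (k + P), σ l = true) :
    Admissible P L r σ := by
  have hrun : ∀ i b, b ≤ L → (∀ l, i < l → l < b → σ l = false) → b - i ≤ P + 1 := by
    intro i b hbL hlost
    by_contra! hlong
    obtain ⟨l, ⟨hil, hlP⟩, hl⟩ := hwindow (i + 1) (by omega)
    exact Bool.eq_false_iff.mp (hlost l hil (by omega)) hl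
  obtain ⟨i, hiL, hiP, hi⟩ := hfirst
  refine ⟨⟨i, hiL, hi⟩, fun j _ _ hlost => ?_, fun j j' _ hj'L _ _ => hrun j j' hj'L.le,
    fun j _ _ => hrun j L le_rfl⟩
  have hji : j ≤ i := le_of_not_gt fun hij => Bool.eq_false_iff.mp (hlost i hij) hi
  omega

end Admissible

theorem admissible_iff_of_le {P L r : ℕ} {σ : ℕ → Bool} (hr : r ≤ P) :
    Admissible P L r σ ↔ (∃ i < L, i + r ≤ P ∧ σ i = true) ∧
      ∀ k, k + P < L → ∃ l ∈ Set.Icc k (k + P), σ l = true :=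
  ⟨fun hσ => ⟨hσ.exists_delivered_early hr, fun _ => hσ.exists_delivered_mem_Icc hr⟩,
    fun h => .of_exists_delivered h.1 h.2⟩

theorem admissible_shift_general {P L r r' : ℕ} (hr : r ≤ P) (hr' : r' ≤ P) {σ σ' : ℕ → Bool}
    (hσ' : Admissible P L r' σ') (hσ0 : σ 0 = true ∨ r < r' ∧ P < L + r)
    (hσs : ∀ i, σ (i + 1) = σ' i) : Admissible P L r σ := by
  rw [admissible_iff_of_le hr'] at hσ'
  obtain ⟨⟨i, hiL, hiP, hi⟩, hwindow⟩ := hσ'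
  have hfirst : ∃ j < L, j + r ≤ P ∧ σ j = true := by
    rcases hσ0 with hdelivered | ⟨hrr', hPL⟩
    · exact ⟨0, by omega, by omega, hdelivered⟩
    · exact ⟨i + 1, by omega, by omega, (hσs i).trans hi⟩
  refine (admissible_iff_of_le hr).mpr ⟨hfirst, fun k hk => ?_⟩
  cases k with
  | zero =>
    obtain ⟨j, -, hjP, hj⟩ := hfirst
    exact ⟨j, ⟨by omega, by omega⟩, hj⟩
  | succ k =>
    obtain ⟨l, ⟨hkl, hlk⟩, hl⟩ := hwindow k (by omega)
    exact ⟨l + 1, ⟨by omega, by omega⟩, (hσs l).trans hl⟩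

/-- **Shifting admissible loss sequences backwards (recursive feasibility step).**
Let `L = N + P`, `N ≥ 1`, `r⁺ ∈ {0, r+1}` with `r ≤ P` if `r⁺ = 0` and `r + 1 ≤ P` if
`r⁺ = r + 1`. If `σ' ∈ D^P_L(r⁺)`, then the sequence `σ` with `σ 0 = 1` iff `r⁺ = 0` and
`σ (i+1) = σ' i` belongs to `D^P_L(r)`. -/
theorem admissible_shift (P L N r : ℕ) (hL : L = N + P) (hN : 1 ≤ N)
    (rplus : ℕ) (hrplus : rplus = 0 ∨ rplus = r + 1)
    (h0 : rplus = 0 → r ≤ P) (h1 : rplus = r + 1 → r + 1 ≤ P)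
    (σ' : ℕ → Bool) (hσ' : Admissible P L rplus σ')
    (σ : ℕ → Bool)
    (hσ0 : σ 0 = (if rplus = 0 then true else false))
    (hσs : ∀ i, σ (i + 1) = σ' i) :
    Admissible P L r σ := by
  refine admissible_shift_general (by omega) (by omega) hσ' (hrplus.imp (fun h => ?_) ?_) hσs
  · rw [hσ0, if_pos h]
  · omega
end
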